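/- arXiv:2209.09523 — 2 statements merged into one kernel-verified Lean document; each statement's English description precedes it below -/
import Mathlib

section
/- Let n ≥ 3, let D_n ∈ M_n(ℂ) be the nilpotent Jordan block (1's on the superdiagonal, 0 elsewhere), and let 𝒥_n be the unital subalgebra of M_n(ℂ) generated by I and D_n, so every A ∈ 𝒥_n has a unique expression A = λ₁I + λ₂D_n + ⋯ + λ_nD_n^{n−1} with λ_i ∈ ℂ. The linear map δ : 𝒥_n → M_n(ℂ) defined by δ(A) = (λ₃ − λ₂)E_{1n} (where E_{1n} is the matrix unit with 1 in position (1,n)) is a local derivation but is not a derivation. -/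
open Matrix

/-- The nilpotent Jordan block: `1`s on the superdiagonal, `0` elsewhere. -/
def jordanBlock (n : ℕ) : Matrix (Fin n) (Fin n) ℂ :=
  Matrix.of fun i j => if (i : ℕ) + 1 = (j : ℕ) then 1 else 0

section

variable {n : ℕ}

/-- `𝒥ₙ`, the unital subalgebra of `Mₙ(ℂ)` generated by the identity and the
nilpotent Jordan block. -/
def Jn (n : ℕ) : Subalgebra ℂ (Matrix (Fin n) (Fin n) ℂ) :=
  Algebra.adjoin ℂ ({jordanBlock n} : Set (Matrix (Fin n) (Fin n) ℂ))

/-- `δ : 𝒥ₙ → Mₙ(ℂ)` is a derivation if `δ(xy) = δ(x)y + xδ(y)`, where `Mₙ(ℂ)` is a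
`𝒥ₙ`-bimodule via matrix multiplication. -/
def IsDerivation (δ : ↥(Jn n) →ₗ[ℂ] Matrix (Fin n) (Fin n) ℂ) : Prop :=
  ∀ x y : ↥(Jn n), δ (x * y) = δ x * (y : Matrix (Fin n) (Fin n) ℂ) +
    (x : Matrix (Fin n) (Fin n) ℂ) * δ y

/-- `δ : 𝒥ₙ → Mₙ(ℂ)` is a local derivation if for every `A ∈ 𝒥ₙ` there is a
derivation `δ_A` with `δ A = δ_A A`. -/
def IsLocalDerivation (δ : ↥(Jn n) →ₗ[ℂ] Matrix (Fin n) (Fin n) ℂ) : Prop :=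
  ∀ A : ↥(Jn n), ∃ δA : ↥(Jn n) →ₗ[ℂ] Matrix (Fin n) (Fin n) ℂ,
    IsDerivation δA ∧ δ A = δA A

end

open Polynomial in
theorem jb_pow (n k : ℕ) (i j : Fin n) :
    (jordanBlock n ^ k) i j = if (i : ℕ) + k = (j : ℕ) then 1 else 0 := by
  induction k generalizing i j with
  | zero => simp [Matrix.one_apply, Fin.ext_iff]
  | succ k ih =>
    rw [pow_succ', Matrix.mul_apply]
    simp only [ih]
    by_cases h : (i : ℕ) + 1 < n
    · rw [Finset.sum_eq_single (⟨i + 1, h⟩ : Fin n)]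
      · simp [jordanBlock, add_assoc, add_comm 1 k]
      · intro b _ hb
        have : ¬ ((i : ℕ) + 1 = b) := fun e => hb (Fin.ext e.symm)
        simp [jordanBlock, this]
      · simp
    · rw [Finset.sum_eq_zero]
      · rw [if_neg]; omega
      · intro b _
        have : ¬ ((i : ℕ) + 1 = b) := by omega
        simp [jordanBlock, this]

open Polynomial in
theorem jb_aeval (n : ℕ) (p : ℂ[X]) (i j : Fin n) :
    (aeval (jordanBlock n) p) i j = if (i : ℕ) ≤ j then p.coeff (j - i) else 0 := by
  induction p using Polynomial.induction_on' with
  | add p q hp hq =>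
    rw [map_add, Matrix.add_apply, hp, hq]
    split_ifs <;> simp
  | monomial k a =>
    rw [aeval_monomial, Algebra.algebraMap_eq_smul_one, smul_mul_assoc, one_mul,
      Matrix.smul_apply, jb_pow, coeff_monomial]
    split_ifs <;> first | omega | simp

open Polynomial in
theorem jn_exists {n : ℕ} (x : Jn n) : ∃ p : ℂ[X], (x : Matrix (Fin n) (Fin n) ℂ) =
    aeval (jordanBlock n) p := by
  obtain ⟨x, h⟩ := x
  have h' : x ∈ (aeval (R := ℂ) (jordanBlock n)).range := by
    rw [← Algebra.adjoin_singleton_eq_range_aeval]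
    exact h
  obtain ⟨p, hp⟩ := h'
  exact ⟨p, hp.symm⟩

/-- The linear map `A ↦ A₀ₖ • M`. -/
noncomputable def entryMap {n : ℕ} (i j : Fin n) (M : Matrix (Fin n) (Fin n) ℂ) :
    ↥(Jn n) →ₗ[ℂ] Matrix (Fin n) (Fin n) ℂ where
  toFun x := (x : Matrix (Fin n) (Fin n) ℂ) i j • M
  map_add' x y := by simp [add_smul]
  map_smul' c x := by simp [mul_smul]

open Polynomial in
theorem single_mul_aeval {n : ℕ} (h0 : 0 < n) (h1 : 1 < n) (h2 : 2 < n) (hl : n - 1 < n) (i : Fin n) (p : ℂ[X]) :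
    Matrix.single i (⟨n - 1, hl⟩ : Fin n) (1 : ℂ) * aeval (jordanBlock n) p =
      p.coeff 0 • Matrix.single i (⟨n - 1, hl⟩ : Fin n) (1 : ℂ) := by
  ext a b
  by_cases ha : a = i
  · subst ha
    rw [Matrix.single_mul_apply_same, jb_aeval, Matrix.smul_apply, Matrix.single_apply]
    have := b.2
    by_cases hb : (b : ℕ) = n - 1
    · simp [hb, Fin.ext_iff]
    · have h1 : ¬ (n - 1 ≤ (b : ℕ)) := by omega
      have h2 : ¬ (n - 1 = (b : ℕ)) := by omega
      simp [h1, h2, Fin.ext_iff]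
  · rw [Matrix.single_mul_apply_of_ne _ _ _ _ _ ha, Matrix.smul_apply, Matrix.single_apply]
    simp [Ne.symm ha]

open Polynomial in
theorem aeval_mul_single0 {n : ℕ} (h0 : 0 < n) (h1 : 1 < n) (h2 : 2 < n) (hl : n - 1 < n) (j : Fin n) (p : ℂ[X]) :
    aeval (jordanBlock n) p * Matrix.single (⟨0, h0⟩ : Fin n) j (1 : ℂ) =
      p.coeff 0 • Matrix.single (⟨0, h0⟩ : Fin n) j (1 : ℂ) := by
  ext a b
  by_cases hb : b = j
  · subst hb
    rw [Matrix.mul_single_apply_same, jb_aeval, Matrix.smul_apply, Matrix.single_apply]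
    by_cases ha : (a : ℕ) = 0
    · simp [ha, Fin.ext_iff]
    · simp [ha, Ne.symm ha, Fin.ext_iff]
  · rw [Matrix.mul_single_apply_of_ne _ _ _ _ _ hb, Matrix.smul_apply, Matrix.single_apply]
    simp [Ne.symm hb]

open Polynomial in
theorem aeval_mul_single1 {n : ℕ} (h0 : 0 < n) (h1 : 1 < n) (h2 : 2 < n) (hl : n - 1 < n) (j : Fin n) (p : ℂ[X]) :
    aeval (jordanBlock n) p * Matrix.single (⟨1, h1⟩ : Fin n) j (1 : ℂ) =
      p.coeff 0 • Matrix.single (⟨1, h1⟩ : Fin n) j (1 : ℂ) +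
      p.coeff 1 • Matrix.single (⟨0, h0⟩ : Fin n) j (1 : ℂ) := by
  ext a b
  by_cases hb : b = j
  · subst hb
    rw [Matrix.mul_single_apply_same, jb_aeval, Matrix.add_apply, Matrix.smul_apply,
      Matrix.smul_apply, Matrix.single_apply, Matrix.single_apply]
    by_cases ha : (a : ℕ) = 0
    · simp [ha, Fin.ext_iff]
    · by_cases ha1 : (a : ℕ) = 1
      · simp [ha1, Fin.ext_iff]
      · have : ¬ ((a : ℕ) ≤ 1) := by omega
        simp [this, Ne.symm ha, Ne.symm ha1, Fin.ext_iff]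
  · rw [Matrix.mul_single_apply_of_ne _ _ _ _ _ hb, Matrix.add_apply, Matrix.smul_apply,
      Matrix.smul_apply, Matrix.single_apply, Matrix.single_apply]
    simp [Ne.symm hb]

open Polynomial in
theorem coeff_two_mul' (p q : ℂ[X]) : (p * q).coeff 2 =
    p.coeff 0 * q.coeff 2 + p.coeff 1 * q.coeff 1 + p.coeff 2 * q.coeff 0 := by
  rw [coeff_mul, Finset.Nat.sum_antidiagonal_eq_sum_range_succ_mk]
  simp [Finset.sum_range_succ]

open Polynomial in
theorem entryMap_apply {n : ℕ} (h0 : 0 < n) (j : Fin n) (M : Matrix (Fin n) (Fin n) ℂ) (x : Jn n)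
    (p : ℂ[X]) (hp : (x : Matrix (Fin n) (Fin n) ℂ) = aeval (jordanBlock n) p) :
    entryMap ⟨0, h0⟩ j M x = p.coeff j • M := by
  simp [entryMap, hp, jb_aeval]

theorem der1 {n : ℕ} (h0 : 0 < n) (h1 : 1 < n) (h2 : 2 < n) (hl : n - 1 < n) (c : ℂ) :
    IsDerivation (c • entryMap (⟨0, h0⟩ : Fin n) ⟨1, h1⟩
      (Matrix.single (⟨0, h0⟩ : Fin n) (⟨n - 1, hl⟩ : Fin n) 1)) := by
  intro x y
  obtain ⟨p, hp⟩ := jn_exists x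
  obtain ⟨q, hq⟩ := jn_exists y
  have hpq : ((x * y : Jn n) : Matrix (Fin n) (Fin n) ℂ) =
    Polynomial.aeval (jordanBlock n) (p * q) := by simp [hp, hq]
  simp only [LinearMap.smul_apply]
  rw [entryMap_apply _ _ _ _ _ hpq, entryMap_apply _ _ _ _ _ hp,
    entryMap_apply _ _ _ _ _ hq, hp, hq]
  simp only [smul_mul_assoc, mul_smul_comm, single_mul_aeval h0 h1 h2 hl, aeval_mul_single0 h0 h1 h2 hl,
    Polynomial.mul_coeff_one]
  module

theorem der2 {n : ℕ} (h0 : 0 < n) (h1 : 1 < n) (h2 : 2 < n) (hl : n - 1 < n) :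
    IsDerivation (entryMap (⟨0, h0⟩ : Fin n) ⟨1, h1⟩
      (Matrix.single (⟨1, h1⟩ : Fin n) (⟨n - 1, hl⟩ : Fin n) 1) +
      entryMap (⟨0, h0⟩ : Fin n) ⟨2, h2⟩
      (Matrix.single (⟨0, h0⟩ : Fin n) (⟨n - 1, hl⟩ : Fin n) 1)) := by
  intro x y
  obtain ⟨p, hp⟩ := jn_exists x
  obtain ⟨q, hq⟩ := jn_exists y
  have hpq : ((x * y : Jn n) : Matrix (Fin n) (Fin n) ℂ) =
    Polynomial.aeval (jordanBlock n) (p * q) := by simp [hp, hq]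
  simp only [LinearMap.add_apply]
  simp only [entryMap_apply _ _ _ _ _ hpq, entryMap_apply _ _ _ _ _ hp,
    entryMap_apply _ _ _ _ _ hq]
  rw [hp, hq]
  simp only [add_mul, mul_add, smul_mul_assoc, mul_smul_comm, single_mul_aeval h0 h1 h2 hl,
    aeval_mul_single0 h0 h1 h2 hl, aeval_mul_single1 h0 h1 h2 hl, Polynomial.mul_coeff_one, coeff_two_mul']
  module

/-- For `n ≥ 3`, the linear map `δ : 𝒥ₙ → Mₙ(ℂ)` sending
`A = λ₁I + λ₂Dₙ + ⋯ + λₙDₙ^{n-1}` to `(λ₃ − λ₂)E₁ₙ` is a local derivation but not a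
derivation. -/
theorem jordan_local_derivation_not_derivation (n : ℕ) (hn : 3 ≤ n) :
    ∃ δ : ↥(Jn n) →ₗ[ℂ] Matrix (Fin n) (Fin n) ℂ,
      (∀ (lam : Fin n → ℂ)
          (h : (∑ i : Fin n, lam i • jordanBlock n ^ (i : ℕ)) ∈ Jn n),
          δ ⟨∑ i : Fin n, lam i • jordanBlock n ^ (i : ℕ), h⟩ =
            (lam ⟨2, by omega⟩ - lam ⟨1, by omega⟩) •
              Matrix.single (⟨0, by omega⟩ : Fin n) (⟨n - 1, by omega⟩ : Fin n) 1) ∧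
      IsLocalDerivation δ ∧ ¬ IsDerivation δ := by
  have h0 : 0 < n := by omega
  have h1 : 1 < n := by omega
  have h2 : 2 < n := by omega
  have hl : n - 1 < n := by omega
  set E : Matrix (Fin n) (Fin n) ℂ := Matrix.single (⟨0, h0⟩ : Fin n) (⟨n - 1, hl⟩ : Fin n) 1
    with hE
  refine ⟨entryMap ⟨0, h0⟩ ⟨2, h2⟩ E - entryMap ⟨0, h0⟩ ⟨1, h1⟩ E, ?_, ?_, ?_⟩
  · intro lam h
    have key : ∀ k : Fin n, (∑ i : Fin n, lam i • jordanBlock n ^ (i : ℕ)) ⟨0, h0⟩ k = lam k := by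
      intro k
      rw [Matrix.sum_apply, Finset.sum_eq_single k]
      · simp [jb_pow]
      · intro b _ hb
        have : ¬ ((b : ℕ) = k) := fun e => hb (Fin.ext e)
        simp [jb_pow, this]
      · simp
    simp only [LinearMap.sub_apply, entryMap, LinearMap.coe_mk, AddHom.coe_mk, key, sub_smul]
  · intro A
    obtain ⟨p, hp⟩ := jn_exists A
    by_cases hc : p.coeff 1 = 0
    · refine ⟨_, der2 h0 h1 h2 hl, ?_⟩
      simp only [LinearMap.add_apply, LinearMap.sub_apply, entryMap_apply _ _ _ _ _ hp, hc]
      simp [hE]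
    · refine ⟨_, der1 h0 h1 h2 hl ((p.coeff 2 - p.coeff 1) / p.coeff 1), ?_⟩
      simp only [LinearMap.smul_apply, LinearMap.sub_apply, entryMap_apply _ _ _ _ _ hp]
      rw [smul_smul, div_mul_cancel₀ _ hc, sub_smul]
  · intro hd
    let D : Jn n := ⟨jordanBlock n, Algebra.subset_adjoin rfl⟩
    have hD : (D : Matrix (Fin n) (Fin n) ℂ) =
      Polynomial.aeval (jordanBlock n) (Polynomial.X : Polynomial ℂ) := by simp [D]
    have hDD : ((D * D : Jn n) : Matrix (Fin n) (Fin n) ℂ) =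
      Polynomial.aeval (jordanBlock n) (Polynomial.X ^ 2 : Polynomial ℂ) := by simp [D, sq]
    have h := hd D D
    simp only [LinearMap.sub_apply, entryMap_apply _ _ _ _ _ hDD,
      entryMap_apply _ _ _ _ _ hD] at h
    rw [hD] at h
    simp only [sub_mul, mul_sub, smul_mul_assoc, mul_smul_comm, hE, single_mul_aeval h0 h1 h2 hl,
      aeval_mul_single0 h0 h1 h2 hl] at h
    have h' := congrFun (congrFun h ⟨0, h0⟩) ⟨n - 1, hl⟩
    simp [Polynomial.coeff_X, Polynomial.coeff_X_pow] at h'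
end

section
/- Let 𝒜 be a complex Banach algebra which is zero product determined and has a bounded approximate identity, let M be a Banach 𝒜-bimodule, and let δ : 𝒜 → M be a bounded derivation. Then the graph 𝒢 = {(a, δ(a)) : a ∈ 𝒜}, which is a closed subalgebra of the trivial square-zero extension 𝒜 ⋉ M (the Banach algebra with underlying space 𝒜 × M, product (a,m)(b,n) = (ab, a·n + m·b), and norm ‖(a,m)‖ = ‖a‖ + ‖m‖), is a zero product determined Banach algebra. -/
open scoped Topology

/-- A complex Banach algebra `A` is *zero product determined*. -/
def ZeroProductDetermined (A : Type*) [NonUnitalNonAssocRing A] [Module ℂ A]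
    [TopologicalSpace A] : Prop :=
  ∀ φ : A →ₗ[ℂ] A →ₗ[ℂ] ℂ, Continuous (fun p : A × A => φ p.1 p.2) →
    (∀ x y : A, x * y = 0 → φ x y = 0) →
    ∃ τ : A →L[ℂ] ℂ, ∀ x y : A, φ x y = τ (x * y)

/-- `A` has a bounded (two-sided) approximate identity. -/
def HasBoundedApproxIdentity (A : Type*) [NonUnitalSeminormedRing A] : Prop :=
  ∃ C : ℝ, 0 < C ∧ ∃ (ι : Type) (l : Filter ι) (e : ι → A), l.NeBot ∧
    (∀ i, ‖e i‖ ≤ C) ∧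
    ∀ a : A, Filter.Tendsto (fun i => e i * a) l (𝓝 a) ∧
      Filter.Tendsto (fun i => a * e i) l (𝓝 a)

/-- A Banach bimodule over a (possibly non-unital) complex Banach algebra `A`:
a Banach space `M` with bounded left and right module actions
(`l a m = a · m`, `r a m = m · a`) satisfying `(a·m)·b = a·(m·b)`. -/
structure BanachBimodule (A : Type*) (M : Type*) [NonUnitalSeminormedRing A]
    [Module ℂ A] [SeminormedAddCommGroup M] [Module ℂ M] where
  l : A →ₗ[ℂ] M →ₗ[ℂ] M
  r : A →ₗ[ℂ] M →ₗ[ℂ] M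
  l_mul : ∀ a b m, l (a * b) m = l a (l b m)
  r_mul : ∀ a b m, r (a * b) m = r b (r a m)
  l_r : ∀ a b m, l a (r b m) = r b (l a m)
  l_bdd : ∃ C : ℝ, ∀ a m, ‖l a m‖ ≤ C * ‖a‖ * ‖m‖
  r_bdd : ∃ C : ℝ, ∀ a m, ‖r a m‖ ≤ C * ‖a‖ * ‖m‖

variable {A M : Type*} [NonUnitalNormedRing A] [NormedSpace ℂ A]
  [NormedAddCommGroup M] [NormedSpace ℂ M]

/-- The trivial square-zero extension `𝒜 ⋉ M`: the ring structure on `A × M` with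
product `(a, m)(b, n) = (ab, a·n + m·b)`. -/
@[reducible] def trivSqZeroExtension (B : BanachBimodule A M) : NonUnitalNonAssocRing (A × M) where
  __ : AddCommGroup (A × M) := inferInstance
  mul p q := (p.1 * q.1, B.l p.1 q.2 + B.r q.1 p.2)
  left_distrib p q r := by
    show (_, _) = (_ + _, _ + _)
    refine Prod.ext (mul_add _ _ _) ?_
    show B.l p.1 (q.2 + r.2) + B.r (q.1 + r.1) p.2 = _
    rw [map_add (B.l p.1), map_add B.r]
    show _ + (B.r q.1 + B.r r.1) p.2 = _
    rw [LinearMap.add_apply]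
    show _ = (B.l p.1 q.2 + B.r q.1 p.2) + (B.l p.1 r.2 + B.r r.1 p.2)
    abel
  right_distrib p q r := by
    show (_, _) = (_ + _, _ + _)
    refine Prod.ext (add_mul _ _ _) ?_
    show B.l (p.1 + q.1) r.2 + B.r r.1 (p.2 + q.2) = _
    rw [map_add B.l, map_add (B.r r.1)]
    show (B.l p.1 + B.l q.1) r.2 + _ = _
    rw [LinearMap.add_apply]
    show _ = (B.l p.1 r.2 + B.r r.1 p.2) + (B.l q.1 r.2 + B.r r.1 q.2)
    abel
  zero_mul p := by
    refine Prod.ext (zero_mul _) ?_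
    show B.l 0 p.2 + B.r p.1 0 = 0
    rw [map_zero B.l, map_zero (B.r p.1)]
    simp
  mul_zero p := by
    refine Prod.ext (mul_zero _) ?_
    show B.l p.1 0 + B.r 0 p.2 = 0
    rw [map_zero (B.l p.1), map_zero B.r]
    simp

/-- Let `A` be a zero product determined complex Banach algebra with a bounded
approximate identity, `M` a Banach `A`-bimodule and `δ : A → M` a bounded derivation.
Then the graph `𝒢 = {(a, δ a) : a ∈ A}`, a closed subalgebra of the trivial
square-zero extension `𝒜 ⋉ M`, is a zero product determined Banach algebra. -/
theorem graph_of_derivation_zpd [IsScalarTower ℂ A A] [SMulCommClass ℂ A A]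
    [CompleteSpace A] [CompleteSpace M]
    (hzpd : ZeroProductDetermined A) (hbai : HasBoundedApproxIdentity A)
    (B : BanachBimodule A M) (δ : A →ₗ[ℂ] M) (hδcont : Continuous δ)
    (hδ : ∀ x y : A, δ (x * y) = B.r y (δ x) + B.l x (δ y)) :
    letI : NonUnitalNonAssocRing (A × M) := trivSqZeroExtension B
    ∀ G : NonUnitalSubalgebra ℂ (A × M), (∀ p : A × M, p ∈ G ↔ p.2 = δ p.1) →
      ZeroProductDetermined ↥G := by
  intro G hG
  let : NonUnitalNonAssocRing (A × M) := trivSqZeroExtension B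
  intro φ hφ h0
  let g : A →ₗ[ℂ] ↥G :=
    { toFun := fun a => ⟨(a, δ a), (hG _).2 rfl⟩
      map_add' := fun a b => Subtype.ext (Prod.ext rfl (map_add δ a b))
      map_smul' := fun c a => Subtype.ext (Prod.ext rfl (map_smul δ c a)) }
  have hg : Continuous g := by
    refine Continuous.subtype_mk (f := fun a => (a, δ a)) ?_ _
    exact continuous_id.prodMk hδcont
  have hsurj : ∀ x : ↥G, g x.1.1 = x := fun x =>
    Subtype.ext (Prod.ext rfl ((hG _).1 x.2).symm)
  have hmul : ∀ a b : A, g a * g b = g (a * b) := by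
    intro a b
    refine Subtype.ext (Prod.ext rfl ?_)
    show B.l a (δ b) + B.r b (δ a) = δ (a * b)
    rw [hδ, add_comm]
  obtain ⟨τ, hτ⟩ := hzpd (φ.compl₁₂ g g)
    (hφ.comp ((hg.comp continuous_fst).prodMk (hg.comp continuous_snd)))
    (fun x y hxy => h0 _ _ (by rw [hmul, hxy, map_zero]))
  let τ' : ↥G →L[ℂ] ℂ :=
    { toFun := fun x => τ x.1.1
      map_add' := fun x y => map_add τ x.1.1 y.1.1
      map_smul' := fun c x => map_smul τ c x.1.1
      cont := τ.continuous.comp (continuous_fst.comp continuous_subtype_val) }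
  refine ⟨τ', fun x y => ?_⟩
  have h := hτ x.1.1 y.1.1
  rw [LinearMap.compl₁₂_apply, hsurj, hsurj] at h
  exact h
end
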